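/- Let h be even and let w be a divisor of q+1. Let L̄ ≤ M_ℓ be a subgroup such that |L̄ ∩ Z| = w and L̄ is the internal direct product of L̄ ∩ Z and a subgroup S isomorphic to the alternating group A₄. Then the number N of orbits of L̄ acting on O equals (q+20)/12 + (q/4)·((q−1)/3)·((q+1)/w). -/

import Mathlib

/-!
The orbits of `L` on the Hermitian curve `O` are counted with Burnside's lemma (`burnside`).

Write `L = S × (L ∩ Z)` with `S ≅ A₄`. Every element of `A₄` has order `1`, `2` or `3`, and since
`q` is a power of `4`, `q + 1` is coprime to `6`; hence every element of `S` has determinant one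
(`exists_params`), that is, it lies in the group `SU(1,1) ≅ SL(2,q)` of matrices `[a, c, 1]`.

The central part acts trivially on the `q + 1` points of `O` on the line `Z = 0`. There the identity
of `S` fixes `q + 1` points, an involution fixes one (`fix_inf_two`) and an element of order three
fixes two (`fix_inf_three`, which uses `q ≡ 1` modulo `3`). As `A₄` has three involutions and eight
elements of order three, these points contribute `w * (q + 1 + 3 + 16) = w * (q + 20)` fixed points.

On the `q ^ 3 - q` remaining points (`card_affine`), the action of `L` is free: if `s * ε` fixes a
vector of norm one, then `ε⁻¹` is an eigenvalue of `s`, so `ε ^ 2 = 1` or `ε ^ 3 = 1`, which gives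
`ε = 1`; and `SU(1,1)` acts freely on vectors of norm one (`fix_affine`). These two counts are
combined in `card_fixed_mul`, and dividing `w * (q + 20) + (q ^ 3 - q)` by `|L| = 12 * w` gives the
formula.
-/

open Matrix

noncomputable def glAct {F : Type*} [Field F] (M : GL (Fin 3) F)
    (x : Projectivization F (Fin 3 → F)) : Projectivization F (Fin 3 → F) :=
  Projectivization.map
    ((LinearMap.GeneralLinearGroup.generalLinearEquiv F (Fin 3 → F)
        (Matrix.GeneralLinearGroup.toLin M)).toLinearMap)
    ((LinearMap.GeneralLinearGroup.generalLinearEquiv F (Fin 3 → F)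
        (Matrix.GeneralLinearGroup.toLin M)).injective) x

noncomputable def numOrbits {F : Type*} [Field F] (L : Subgroup (GL (Fin 3) F))
    (O : Set (Projectivization F (Fin 3 → F))) : ℕ :=
  Nat.card ((fun x => {y | ∃ g ∈ L, glAct g x = y}) '' O :
    Set (Set (Projectivization F (Fin 3 → F))))

def hermitianPts (q : ℕ) (F : Type*) [Field F] : Set (Projectivization F (Fin 3 → F)) :=
  {x | x.rep 1 ^ (q + 1) = x.rep 0 ^ (q + 1) - x.rep 2 ^ (q + 1)}

def MlSet (q : ℕ) (F : Type*) [Field F] : Set (GL (Fin 3) F) :=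
  {M | ∃ a c τ : F, a ^ (q + 1) - c ^ (q + 1) = 1 ∧ τ ^ (q + 1) = 1 ∧
    (M : Matrix (Fin 3) (Fin 3) F) = !![a, τ * c ^ q, 0; c, τ * a ^ q, 0; 0, 0, 1]}

def ZSet (q : ℕ) (F : Type*) [Field F] : Set (GL (Fin 3) F) :=
  {M | ∃ ε : F, ε ^ (q + 1) = 1 ∧ (M : Matrix (Fin 3) (Fin 3) F) = Matrix.diagonal ![ε, ε, 1]}

/-! ### The alternating group on four letters and the field with `q ^ 2` elements -/

lemma A4_cases : ∀ g : alternatingGroup (Fin 4), g ^ 2 = 1 ∨ g ^ 3 = 1 := by decide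

/-- `A₄` has one identity element, three involutions and eight elements of order three. -/
lemma A4_sum (k : ℕ) : ∑ g : alternatingGroup (Fin 4),
    (if g = 1 then k else if g ^ 2 = 1 then 1 else 2) = k + 19 := by
  have h1 : ∀ g : alternatingGroup (Fin 4), (if g = 1 then k else if g ^ 2 = 1 then 1 else 2)
      = (if g = 1 then k else 0) + (if g = 1 then 0 else if g ^ 2 = 1 then 1 else 2) := by
    intro g; split_ifs <;> simp
  have h2 : ∑ g : alternatingGroup (Fin 4),
    (if g = 1 then 0 else if g ^ 2 = 1 then 1 else 2) = 19 := by decide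
  rw [Finset.sum_congr rfl (fun g _ => h1 g), Finset.sum_add_distrib, h2]
  simp

section Field

variable {h q : ℕ} {F : Type*} [Field F]

/-- `x ↦ x ^ q` is the involutory automorphism of `F` over `𝔽_q`. -/
lemma bar_bar [Fintype F] (hF : Fintype.card F = q ^ 2) (x : F) : (x ^ q) ^ q = x := by
  rw [← pow_mul, ← sq, ← hF, FiniteField.pow_card]

lemma bar_add [CharP F 2] (hq : q = 2 ^ h) (x y : F) : (x + y) ^ q = x ^ q + y ^ q := by
  subst hq; exact add_pow_char_pow x y 2 h

lemma q_mod (hq : q = 2 ^ h) (heven : Even h) : q % 3 = 1 := by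
  obtain ⟨k, rfl⟩ := heven
  subst hq
  rw [← two_mul, pow_mul, Nat.pow_mod]; norm_num

lemma eq_one_of_sq [CharP F 2] {x : F} (hx : x ^ 2 = 1) : x = 1 := by
  have h2 : (2 : F) = 0 := CharTwo.two_eq_zero
  have : (x - 1) ^ 2 = 0 := by linear_combination hx + (1 - x) * h2
  exact sub_eq_zero.1 (pow_eq_zero_iff (two_ne_zero) |>.1 this)

lemma eq_one_of_cube (hm : q % 3 = 1) {x : F} (hx : x ^ 3 = 1) (hx' : x ^ (q + 1) = 1) : x = 1 := by
  have h1 : orderOf x ∣ 3 := orderOf_dvd_of_pow_eq_one hx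
  have h2 : orderOf x ∣ q + 1 := orderOf_dvd_of_pow_eq_one hx'
  have hc : Nat.Coprime 3 (q + 1) := by
    rw [Nat.Prime.coprime_iff_not_dvd (by norm_num)]; omega
  exact orderOf_eq_one_iff.1 (Nat.eq_one_of_dvd_coprimes hc h1 h2)

/-- Surjectivity of the norm from `𝔽_{q²}` to `𝔽_q`, with all nonzero fibres of size `q + 1`. -/
lemma card_norm_fibre [Fintype F] (hq : q = 2 ^ h) (hF : Fintype.card F = q ^ 2) {t : F}
    (ht : t ≠ 0) (htq : t ^ q = t) : {x : F | x ^ (q + 1) = t}.ncard = q + 1 := by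
  classical
  have hq1 : 1 ≤ q := by subst hq; exact Nat.one_le_two_pow
  obtain ⟨g, hg⟩ := IsCyclic.exists_generator (α := Fˣ)
  have hord : orderOf g = (q - 1) * (q + 1) := by
    rw [orderOf_eq_card_of_forall_mem_zpowers hg, Nat.card_eq_fintype_card, Fintype.card_units, hF]
    obtain ⟨r, rfl⟩ : ∃ r, q = r + 1 := ⟨q - 1, by omega⟩
    simp only [Nat.add_sub_cancel]
    apply Nat.sub_eq_of_eq_add; ring
  have hpos : 0 < orderOf g := orderOf_pos g
  have hq2 : 0 < q - 1 := by
    rcases Nat.eq_zero_or_pos (q - 1) with h0 | h0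
    · rw [hord, h0] at hpos; simp at hpos
    · exact h0
  have hζ : IsPrimitiveRoot ((g : F) ^ (q - 1)) (q + 1) := by
    have : IsPrimitiveRoot (g : F) (orderOf g) := by
      rw [← orderOf_units]; exact IsPrimitiveRoot.orderOf _
    exact this.pow hpos hord
  have hex : ∃ α : F, α ^ (q + 1) = t := by
    obtain ⟨k, hk⟩ := (mem_powers_iff_mem_zpowers (x := g)).2 (hg (Units.mk0 t ht))
    have h1 : (Units.mk0 t ht) ^ (q - 1) = 1 := by
      ext
      have : t * t ^ (q - 1) = t * 1 := by
        rw [← pow_succ', Nat.sub_add_cancel hq1, htq, mul_one]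
      simpa using mul_left_cancel₀ ht this
    simp only at hk
    rw [← hk, ← pow_mul] at h1
    have h2 := orderOf_dvd_of_pow_eq_one h1
    rw [hord, mul_comm k] at h2
    obtain ⟨m, rfl⟩ := Nat.dvd_of_mul_dvd_mul_left hq2 h2
    refine ⟨(g : F) ^ m, ?_⟩
    have := congrArg (Units.val) hk
    rw [← pow_mul, mul_comm m]; simpa using this
  have hset : {x : F | x ^ (q + 1) = t} = ((Polynomial.nthRoots (q + 1) t).toFinset : Set F) := by
    ext x; simp
  rw [hset, Set.ncard_coe_finset, Multiset.toFinset_card_of_nodup (hζ.nthRoots_nodup ht),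
    hζ.card_nthRoots, if_pos hex]

/-- The affine part of the Hermitian curve has `q ^ 3 - q` points: over `y` there is one point if
`y ^ (q + 1) = 1`, and there are `q + 1` points otherwise. -/
lemma card_affine [Fintype F] [CharP F 2] (hq : q = 2 ^ h) (hF : Fintype.card F = q ^ 2) :
    {p : F × F | p.1 ^ (q + 1) - p.2 ^ (q + 1) = 1}.ncard + q = q ^ 3 := by
  classical
  have hq1 : 1 ≤ q := by subst hq; exact Nat.one_le_two_pow
  have h2 : (2 : F) = 0 := CharTwo.two_eq_zero
  have e : {p : F × F | p.1 ^ (q + 1) - p.2 ^ (q + 1) = 1} ≃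
      Σ y : F, {x : F | x ^ (q + 1) = 1 + y ^ (q + 1)} :=
    { toFun := fun p => ⟨p.1.2, p.1.1, by
        have := p.2; simp only [Set.mem_ofPred_eq] at this ⊢; linear_combination this⟩
      invFun := fun s => ⟨(s.2.1, s.1), by
        have := s.2.2; simp only [Set.mem_ofPred_eq] at this ⊢; linear_combination this⟩
      left_inv := fun _ => rfl
      right_inv := fun _ => rfl }
  have hnb : ∀ y : F, (1 + y ^ (q + 1)) ^ q = 1 + y ^ (q + 1) := by
    intro y
    rw [bar_add hq, one_pow, ← pow_mul, mul_comm, pow_mul, pow_succ, bar_bar hF, pow_succ]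
    ring
  have hfib : ∀ y : F, Nat.card {x : F | x ^ (q + 1) = 1 + y ^ (q + 1)}
      = if y ^ (q + 1) = 1 then 1 else q + 1 := by
    intro y
    rw [Nat.card_coe_set_eq]
    split_ifs with hy
    · rw [hy, show (1 + 1 : F) = 0 by linear_combination h2, Set.ncard_eq_one]
      exact ⟨0, by ext x; simp⟩
    · apply card_norm_fibre hq hF _ (hnb y)
      intro h0; apply hy; linear_combination h0 - h2
  rw [← Nat.card_coe_set_eq, Nat.card_congr e, Nat.card_sigma, Finset.sum_congr rfl
    (fun y _ => hfib y), Finset.sum_ite, Finset.sum_const, Finset.sum_const]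
  have h3 : (Finset.univ.filter fun y : F => y ^ (q + 1) = 1).card = q + 1 := by
    refine Eq.trans ?_ (card_norm_fibre hq hF (t := 1) one_ne_zero (one_pow _))
    rw [← Set.ncard_coe_finset]
    congr 1; ext; simp
  have h4 := Finset.card_filter_add_card_filter_not (s := (Finset.univ : Finset F))
    (fun y : F => y ^ (q + 1) = 1)
  rw [h3, Finset.card_univ, hF] at h4
  rw [h3]
  generalize (Finset.univ.filter fun y : F => ¬ y ^ (q + 1) = 1).card = n at *
  simp only [smul_eq_mul]
  have h5 : (q + 1 + n) * (q + 1) = q ^ 2 * (q + 1) := by rw [h4]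
  nlinarith

/-- `SU(1,1)` acts freely on vectors of norm one. This is seen by pairing the two equations of a fixed
vector with the vector itself. -/
lemma fix_affine [Fintype F] [CharP F 2] (hq : q = 2 ^ h) (hF : Fintype.card F = q ^ 2)
    {a c x y : F} (hac : a ^ (q + 1) - c ^ (q + 1) = 1) (hxy : x ^ (q + 1) - y ^ (q + 1) = 1)
    (h1 : a * x + c ^ q * y = x) (h2 : c * x + a ^ q * y = y) : a = 1 ∧ c = 0 := by
  have h3 := congrArg (· ^ q) h2
  simp only [bar_add hq, mul_pow, bar_bar hF] at h3
  have ha : a = 1 := by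
    rw [pow_succ, pow_succ] at hxy
    linear_combination x ^ q * h1 - y * h3 + (1 - a) * hxy
  subst ha
  refine ⟨rfl, ?_⟩
  have : c ^ (q + 1) = 0 := by simpa using hac
  exact (pow_eq_zero_iff (by omega)).1 this

/-- A nontrivial involution of `SU(1,1)` (characterized by `c ≠ 0` and `a ^ q = a`) fixes exactly
one point `(u : 1 : 0)` with `u ^ (q + 1) = 1`: the fixed points satisfy `u ^ 2 = c ^ (q - 1)`, and
squaring is bijective. -/
lemma fix_inf_two [Fintype F] [CharP F 2] (hF : Fintype.card F = q ^ 2)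
    {a c : F} (hc : c ≠ 0) (ha : a ^ q = a) :
    {u : F | u ^ (q + 1) = 1 ∧ a * u + c ^ q = u * (c * u + a ^ q)}.ncard = 1 := by
  rw [Set.ncard_eq_one]
  obtain ⟨v, hv⟩ : ∃ v : F, v ^ 2 = c ^ q / c := by
    obtain ⟨v, hv⟩ := FiniteField.isSquare_of_char_two (F := F)
      (CharP.eq F (inferInstance) (ringChar.charP F) |>.symm) (c ^ q / c)
    exact ⟨v, by rw [hv, sq]⟩
  refine ⟨v, ?_⟩
  ext u
  simp only [Set.mem_ofPred_eq, Set.mem_singleton_iff, ha]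
  have h0 : v ^ 2 * c = c ^ q := by rw [hv]; field_simp
  constructor
  · rintro ⟨-, h1⟩
    have : u ^ 2 = v ^ 2 := by
      apply mul_right_cancel₀ hc
      linear_combination -h1 - h0
    have h5 : (u - v) ^ 2 = 0 := by
      have h2 : (2 : F) = 0 := CharTwo.two_eq_zero
      linear_combination this + (v ^ 2 - u * v) * h2
    exact sub_eq_zero.1 (pow_eq_zero_iff (two_ne_zero) |>.1 h5)
  · rintro rfl
    constructor
    · apply eq_one_of_sq
      have hcq : c ^ q ≠ 0 := pow_ne_zero _ hc
      rw [← pow_mul, mul_comm, pow_mul, hv, pow_succ, div_pow, bar_bar hF]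
      field_simp
    · linear_combination -h0

/-- A nondiagonal element of `SU(1,1)` of trace one (so of order three) fixes exactly two points
`(u : 1 : 0)` with `u ^ (q + 1) = 1`. They are `u = (a + θ) / c` for the two primitive cube roots of
unity `θ`, which lie in `𝔽_q` because `q ≡ 1` modulo `3`. -/
lemma fix_inf_three [Fintype F] [CharP F 2] (hq : q = 2 ^ h) (hF : Fintype.card F = q ^ 2)
    (hm : q % 3 = 1)
    {a c : F} (hc : c ≠ 0) (hac : a ^ (q + 1) - c ^ (q + 1) = 1) (ha : a + a ^ q = 1) :
    {u : F | u ^ (q + 1) = 1 ∧ a * u + c ^ q = u * (c * u + a ^ q)}.ncard = 2 := by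
  have h2 : (2 : F) = 0 := CharTwo.two_eq_zero
  obtain ⟨ω, hω, hωq⟩ : ∃ ω : F, ω ^ 2 + ω + 1 = 0 ∧ ω ^ q = ω := by
    classical
    obtain ⟨g, hg⟩ := exists_prime_orderOf_dvd_card (G := Fˣ) 3 (by
      rw [Fintype.card_units, hF]
      obtain ⟨k, hk⟩ : ∃ k, q = 3 * k + 1 := ⟨q / 3, by omega⟩
      refine ⟨3 * k ^ 2 + 2 * k, ?_⟩
      rw [hk]; apply Nat.sub_eq_of_eq_add; ring)
    have h3 : (g : F) ^ 3 = 1 := by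
      have := pow_orderOf_eq_one g
      rw [hg] at this
      simpa using congrArg Units.val this
    have h1 : (g : F) ≠ 1 := by
      intro h1
      have : g = 1 := by ext; simpa using h1
      rw [this] at hg; simp at hg
    refine ⟨g, ?_, ?_⟩
    · apply mul_left_cancel₀ (sub_ne_zero.2 h1)
      linear_combination h3
    · rw [← Nat.div_add_mod q 3, hm, pow_succ, pow_mul, h3]; simp
  have ha' : a ^ q = a + 1 := by linear_combination ha - a * h2
  rw [pow_succ, pow_succ, ha'] at hac
  have hcc : c ^ q = (a ^ 2 + a + 1) / c := by
    field_simp; linear_combination -hac - h2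
  rw [Set.ncard_eq_two]
  refine ⟨(a + ω) / c, (a + ω + 1) / c, ?_, ?_⟩
  · intro hne
    field_simp at hne
    apply one_ne_zero (α := F)
    linear_combination -hne
  ext u
  simp only [Set.mem_ofPred_eq, Set.mem_insert_iff, Set.mem_singleton_iff]
  have key : a * u + c ^ q = u * (c * u + a ^ q) ↔
      (u * c - (a + ω)) * (u * c - (a + ω + 1)) = 0 := by
    rw [hcc, ha', ← mul_left_inj' hc, add_mul, div_mul_cancel₀ _ hc]
    constructor
    · intro h1; linear_combination -h1 + hω + (a^2+a+u*c*(-a-ω-1)+a*ω) * h2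
    · intro h1; linear_combination -h1 + hω + (a^2+a+u*c*(-a-ω-1)+a*ω) * h2
  rw [key, mul_eq_zero, sub_eq_zero, sub_eq_zero, eq_div_iff hc, eq_div_iff hc]
  refine ⟨fun h => h.2, fun h => ⟨?_, h⟩⟩
  have hgen : ∀ θ : F, θ ^ 2 + θ + 1 = 0 → θ ^ q = θ → u * c = a + θ → u ^ (q + 1) = 1 := by
    intro θ h1 h3 h4
    have h5 : u ^ q * c ^ q = a + 1 + θ := by rw [← mul_pow, h4, bar_add hq, ha', h3]
    have h6 : c ^ q * c ≠ 0 := mul_ne_zero (pow_ne_zero _ hc) hc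
    apply mul_right_cancel₀ h6
    rw [pow_succ]
    linear_combination (u * c) * h5 + (a + 1 + θ) * h4 + hac + h1 + (a * θ) * h2
  rcases h with h | h
  · exact hgen ω hω hωq h
  · refine hgen (ω + 1) ?_ ?_ (by rw [h]; ring)
    · linear_combination hω + (ω + 1) * h2
    · rw [bar_add hq, hωq, one_pow]

end Field

/-! ### The action on the projective plane in coordinates -/

section Geometry

variable {h q : ℕ} {F : Type*} [Field F]

lemma glAct_mk (M : GL (Fin 3) F) (v : Fin 3 → F) (hv : v ≠ 0) :
    ∃ hv', glAct M (Projectivization.mk F v hv) =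
      Projectivization.mk F ((M : Matrix (Fin 3) (Fin 3) F) *ᵥ v) hv' :=
  ⟨fun h0 => hv ((LinearMap.GeneralLinearGroup.generalLinearEquiv F (Fin 3 → F)
        (Matrix.GeneralLinearGroup.toLin M)).injective (by rw [map_zero]; exact h0)), rfl⟩

lemma glAct_one (x : Projectivization F (Fin 3 → F)) : glAct 1 x = x := by
  induction x using Projectivization.ind with
  | h v hv =>
    obtain ⟨h', e⟩ := glAct_mk 1 v hv
    rw [e]; simp

lemma glAct_mul (M N : GL (Fin 3) F) (x : Projectivization F (Fin 3 → F)) :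
    glAct (M * N) x = glAct M (glAct N x) := by
  induction x using Projectivization.ind with
  | h v hv =>
    obtain ⟨h1, e1⟩ := glAct_mk (M * N) v hv
    obtain ⟨h2, e2⟩ := glAct_mk N v hv
    obtain ⟨h3, e3⟩ := glAct_mk M _ h2
    rw [e1, e2, e3]; simp

lemma mem_hermitian_mk (v : Fin 3 → F) (hv : v ≠ 0) :
    Projectivization.mk F v hv ∈ hermitianPts q F ↔
      v 1 ^ (q + 1) = v 0 ^ (q + 1) - v 2 ^ (q + 1) := by
  obtain ⟨a, ha⟩ := Projectivization.exists_smul_eq_mk_rep F v hv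
  simp only [hermitianPts, Set.mem_ofPred_eq, ← ha, Pi.smul_apply, Units.smul_def, smul_eq_mul,
    mul_pow]
  have : (a : F) ^ (q + 1) ≠ 0 := pow_ne_zero _ a.ne_zero
  rw [← mul_sub, mul_right_inj' this]

/-- The affine point `(x : y : 1)`. -/
def affPt (p : F × F) : Projectivization F (Fin 3 → F) :=
  Projectivization.mk F ![p.1, p.2, 1] (fun h => by simpa using congrFun h 2)

/-- The point `(u : 1 : 0)` of the line `Z = 0`. -/
def infPt (u : F) : Projectivization F (Fin 3 → F) :=
  Projectivization.mk F ![u, 1, 0] (fun h => by simpa using congrFun h 1)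

lemma affPt_injective : Function.Injective (affPt (F := F)) := by
  rintro ⟨x, y⟩ ⟨x', y'⟩ h
  rw [affPt, affPt, Projectivization.mk_eq_mk_iff'] at h
  obtain ⟨a, ha⟩ := h
  have h0 := congrFun ha 0
  have h1 := congrFun ha 1
  have h2 := congrFun ha 2
  simp at h0 h1 h2
  subst h2
  simp at h0 h1
  rw [h0, h1]

lemma infPt_injective : Function.Injective (infPt (F := F)) := by
  intro x x' h
  rw [infPt, infPt, Projectivization.mk_eq_mk_iff'] at h
  obtain ⟨a, ha⟩ := h
  have h0 := congrFun ha 0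
  have h1 := congrFun ha 1
  simp at h0 h1
  subst h1
  simpa using h0.symm

lemma affPt_ne_infPt (p : F × F) (u : F) : affPt p ≠ infPt u := by
  intro h
  rw [affPt, infPt, Projectivization.mk_eq_mk_iff'] at h
  obtain ⟨a, ha⟩ := h
  simpa using congrFun ha 2

lemma affPt_mem (p : F × F) :
    affPt p ∈ hermitianPts q F ↔ p.1 ^ (q + 1) - p.2 ^ (q + 1) = 1 := by
  rw [affPt, mem_hermitian_mk]
  simp only [Matrix.cons_val, one_pow]
  constructor <;> intro h <;> linear_combination -h

lemma infPt_mem (u : F) : infPt u ∈ hermitianPts q F ↔ u ^ (q + 1) = 1 := by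
  rw [infPt, mem_hermitian_mk]
  simp [eq_comm]

lemma hermitian_cases {P : Projectivization F (Fin 3 → F)} (hP : P ∈ hermitianPts q F) :
    (∃ p, P = affPt p) ∨ ∃ u, P = infPt u := by
  induction P using Projectivization.ind with
  | h v hv =>
    rw [mem_hermitian_mk] at hP
    by_cases h2 : v 2 = 0
    · right
      have h1 : v 1 ≠ 0 := by
        intro h1
        rw [h1, h2] at hP
        have h0 : v 0 = 0 := by simpa using hP.symm
        apply hv
        ext i; fin_cases i <;> simp [h0, h1, h2]
      refine ⟨v 0 / v 1, ?_⟩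
      rw [infPt, Projectivization.mk_eq_mk_iff']
      refine ⟨v 1, ?_⟩
      ext i; fin_cases i <;> simp [h2]
      field_simp
    · left
      refine ⟨(v 0 / v 2, v 1 / v 2), ?_⟩
      rw [affPt, Projectivization.mk_eq_mk_iff']
      refine ⟨v 2, ?_⟩
      ext i; fin_cases i <;> simp <;> field_simp

lemma glAct_affPt {M : GL (Fin 3) F} {α β γ δ : F}
    (hM : (M : Matrix (Fin 3) (Fin 3) F) = !![α, β, 0; γ, δ, 0; 0, 0, 1]) (p : F × F) :
    glAct M (affPt p) = affPt (α * p.1 + β * p.2, γ * p.1 + δ * p.2) := by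
  obtain ⟨h1, e1⟩ := glAct_mk M ![p.1, p.2, 1] (fun h => by simpa using congrFun h 2)
  rw [affPt, e1, affPt]
  congr 1
  rw [hM]
  ext i; fin_cases i <;> simp [Matrix.mulVec, dotProduct, Fin.sum_univ_three]

lemma glAct_infPt {M : GL (Fin 3) F} {α β γ δ : F}
    (hM : (M : Matrix (Fin 3) (Fin 3) F) = !![α, β, 0; γ, δ, 0; 0, 0, 1]) (u : F) :
    glAct M (infPt u) = infPt u ↔ α * u + β = u * (γ * u + δ) := by
  obtain ⟨h1, e1⟩ := glAct_mk M ![u, 1, 0] (fun h => by simpa using congrFun h 1)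
  rw [infPt, e1, Projectivization.mk_eq_mk_iff', hM]
  constructor
  · rintro ⟨a, ha⟩
    have h0 := congrFun ha 0
    have h1 := congrFun ha 1
    simp [Matrix.mulVec, dotProduct, Fin.sum_univ_three] at h0 h1
    rw [← h0, ← h1]; ring
  · intro h
    refine ⟨γ * u + δ, ?_⟩
    ext i; fin_cases i <;> simp [Matrix.mulVec, dotProduct, Fin.sum_univ_three]
    rw [h]; ring

/-- Elements of `M_ℓ` preserve the Hermitian curve. -/
lemma glAct_mem [Fintype F] [CharP F 2] (hq : q = 2 ^ h) (hF : Fintype.card F = q ^ 2)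
    {M : GL (Fin 3) F} (hM : M ∈ MlSet q F) {P : Projectivization F (Fin 3 → F)}
    (hP : P ∈ hermitianPts q F) : glAct M P ∈ hermitianPts q F := by
  obtain ⟨a, c, τ, hac, hτ, hM⟩ := hM
  induction P using Projectivization.ind with
  | h v hv =>
    obtain ⟨h1, e1⟩ := glAct_mk M v hv
    rw [e1, mem_hermitian_mk, hM]
    rw [mem_hermitian_mk] at hP
    simp only [Matrix.mulVec, dotProduct, Fin.sum_univ_three, Matrix.of_apply, Matrix.cons_val,
      zero_mul, add_zero, zero_add, one_mul]
    simp only [pow_succ _ q] at *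
    simp only [bar_add hq, mul_pow, bar_bar hF]
    linear_combination τ ^ q * τ * (a ^ q * a - c ^ q * c) * hP
      + (τ ^ q * τ * (v 0 ^ q * v 0 - v 2 ^ q * v 2) - v 0 ^ q * v 0) * hac
      + (v 0 ^ q * v 0 - v 2 ^ q * v 2) * hτ

/-- Fixed points on the Hermitian curve split into those on the line `Z = 0` and the affine ones, each
described by coordinates. -/
lemma card_fixed [Fintype F] {M : GL (Fin 3) F} {α β γ δ : F}
    (hM : (M : Matrix (Fin 3) (Fin 3) F) = !![α, β, 0; γ, δ, 0; 0, 0, 1]) :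
    {P | P ∈ hermitianPts q F ∧ glAct M P = P}.ncard =
      {u : F | u ^ (q + 1) = 1 ∧ α * u + β = u * (γ * u + δ)}.ncard +
      {p : F × F | p.1 ^ (q + 1) - p.2 ^ (q + 1) = 1 ∧
        α * p.1 + β * p.2 = p.1 ∧ γ * p.1 + δ * p.2 = p.2}.ncard := by
  rw [← Set.ncard_image_of_injective {u : F | _} infPt_injective,
    ← Set.ncard_image_of_injective {p : F × F | _} affPt_injective, ← Set.ncard_union_eq]
  · congr 1
    ext P
    simp only [Set.mem_ofPred_eq, Set.mem_union, Set.mem_image]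
    constructor
    · rintro ⟨hP, hf⟩
      rcases hermitian_cases hP with ⟨p, rfl⟩ | ⟨u, rfl⟩
      · right
        rw [glAct_affPt hM] at hf
        have := affPt_injective hf
        exact ⟨p, ⟨(affPt_mem p).1 hP, congrArg Prod.fst this, congrArg Prod.snd this⟩, rfl⟩
      · left
        exact ⟨u, ⟨(infPt_mem u).1 hP, (glAct_infPt hM u).1 hf⟩, rfl⟩
    · rintro (⟨u, ⟨h1, h2⟩, rfl⟩ | ⟨p, ⟨h1, h2, h3⟩, rfl⟩)
      · exact ⟨(infPt_mem u).2 h1, (glAct_infPt hM u).2 h2⟩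
      · exact ⟨(affPt_mem p).2 h1, by rw [glAct_affPt hM, h2, h3]⟩
  · rw [Set.disjoint_left]
    rintro _ ⟨u, -, rfl⟩ ⟨p, -, hp⟩
    exact affPt_ne_infPt p u hp

end Geometry

/-! ### Fixed points of elements of `L` -/

section FixedPoints

variable {h q : ℕ} {F : Type*} [Field F]

/-- Elements of `M_ℓ` of order dividing `2` or `3` have determinant one, because `q + 1` is
coprime to `6`. -/
lemma exists_params [CharP F 2] (hm : q % 3 = 1)
    {s : GL (Fin 3) F} (hs : s ∈ MlSet q F) (ho : s ^ 2 = 1 ∨ s ^ 3 = 1) :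
    ∃ a c : F, a ^ (q + 1) - c ^ (q + 1) = 1 ∧
      (s : Matrix (Fin 3) (Fin 3) F) = !![a, c ^ q, 0; c, a ^ q, 0; 0, 0, 1] := by
  obtain ⟨a, c, τ, hac, hτ, hM⟩ := hs
  have hdet : (s : Matrix (Fin 3) (Fin 3) F).det = τ := by
    rw [hM, Matrix.det_fin_three]
    simp only [Matrix.of_apply, Matrix.cons_val]
    rw [pow_succ, pow_succ] at hac
    linear_combination τ * hac
  have hpow : ∀ n : ℕ, s ^ n = 1 → τ ^ n = 1 := by
    intro n hn
    have := congrArg (fun g : GL (Fin 3) F => (g : Matrix (Fin 3) (Fin 3) F).det) hn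
    simpa [hdet] using this
  have h1 : τ = 1 := by
    rcases ho with h2 | h3
    · exact eq_one_of_sq (hpow 2 h2)
    · exact eq_one_of_cube hm (hpow 3 h3) hτ
  subst h1
  exact ⟨a, c, hac, by simpa using hM⟩

lemma eq_one_of_params {s : GL (Fin 3) F} (hq0 : q ≠ 0)
    (hM : (s : Matrix (Fin 3) (Fin 3) F) = !![1, 0 ^ q, 0; 0, 1 ^ q, 0; 0, 0, 1]) : s = 1 := by
  apply Units.ext
  rw [hM]
  ext i j; fin_cases i <;> fin_cases j <;> simp [hq0]

/-- The number of points of `O` on the line `Z = 0` fixed by an element of `SU(1,1)` whose order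
divides `2` or `3`. -/
lemma card_fixed_inf [Fintype F] [CharP F 2] [DecidableEq (GL (Fin 3) F)]
    (hq : q = 2 ^ h) (hF : Fintype.card F = q ^ 2)
    (hm : q % 3 = 1) {s : GL (Fin 3) F} (ho : s ^ 2 = 1 ∨ s ^ 3 = 1) {a c : F}
    (hac : a ^ (q + 1) - c ^ (q + 1) = 1)
    (hM : (s : Matrix (Fin 3) (Fin 3) F) = !![a, c ^ q, 0; c, a ^ q, 0; 0, 0, 1]) :
    {u : F | u ^ (q + 1) = 1 ∧ a * u + c ^ q = u * (c * u + a ^ q)}.ncard =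
      if s = 1 then q + 1 else if s ^ 2 = 1 then 1 else 2 := by
  have hq0 : q ≠ 0 := by subst hq; positivity
  have h2 : (2 : F) = 0 := CharTwo.two_eq_zero
  have ent : ∀ n : ℕ, s ^ n = 1 → (s : Matrix (Fin 3) (Fin 3) F) ^ n = 1 := by
    intro n hn
    simpa using congrArg Units.val hn
  split_ifs with h1 hs2
  · have e : (s : Matrix (Fin 3) (Fin 3) F) = 1 := by rw [h1]; rfl
    rw [hM] at e
    have ha : a = 1 := by simpa using congrFun (congrFun e 0) 0
    have hc : c = 0 := by simpa using congrFun (congrFun e 1) 0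
    subst ha hc
    refine Eq.trans ?_ (card_norm_fibre hq hF (t := 1) one_ne_zero (one_pow _))
    congr 1; ext u; simp [hq0]
  · have e := ent 2 hs2
    rw [hM, sq] at e
    have e00 := congrFun (congrFun e 0) 0
    have e10 := congrFun (congrFun e 1) 0
    simp [Matrix.mul_apply, Fin.sum_univ_three] at e00 e10
    have hc : c ≠ 0 := by
      rintro rfl
      have ha : a = 1 := eq_one_of_sq (by simpa [sq, hq0] using e00)
      subst ha
      exact h1 (eq_one_of_params hq0 hM)
    apply fix_inf_two hF hc
    apply mul_left_cancel₀ hc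
    linear_combination e10 - c * a * h2
  · have hs3 := ho.resolve_left hs2
    have e := ent 3 hs3
    rw [hM, pow_succ, sq] at e
    have e00 := congrFun (congrFun e 0) 0
    have e10 := congrFun (congrFun e 1) 0
    simp [Matrix.mul_apply, Fin.sum_univ_three] at e00 e10
    have hc : c ≠ 0 := by
      rintro rfl
      have ha3 : a ^ 3 = 1 := by
        simp [hq0] at e00
        linear_combination e00
      have ha : a = 1 := eq_one_of_cube hm ha3 (by simpa using hac)
      subst ha
      exact h1 (eq_one_of_params hq0 hM)
    apply fix_inf_three hq hF hm hc hac
    apply eq_one_of_sq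
    apply mul_left_cancel₀ hc
    rw [pow_succ, pow_succ] at hac
    linear_combination e10 + c * hac

/-- The number of points of `O` fixed by `s * z`, for `s` of order dividing `2` or `3` and `z`
central. On the line `Z = 0` only `s` matters; an affine fixed point forces `s = z = 1`. -/
lemma card_fixed_mul [Fintype F] [CharP F 2] [DecidableEq (GL (Fin 3) F)]
    (hq : q = 2 ^ h) (hF : Fintype.card F = q ^ 2)
    (hm : q % 3 = 1) {s z : GL (Fin 3) F} (hs : s ∈ MlSet q F) (ho : s ^ 2 = 1 ∨ s ^ 3 = 1)
    (hz : z ∈ ZSet q F) :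
    {P | P ∈ hermitianPts q F ∧ glAct (s * z) P = P}.ncard =
      (if s = 1 then q + 1 else if s ^ 2 = 1 then 1 else 2) +
      (if s = 1 ∧ z = 1 then q ^ 3 - q else 0) := by
  have hq0 : q ≠ 0 := by subst hq; positivity
  obtain ⟨a, c, hac, hM⟩ := exists_params hm hs ho
  obtain ⟨ε, hε, hzM⟩ := hz
  have hε0 : ε ≠ 0 := by rintro rfl; simp at hε
  have hsz : ((s * z : GL (Fin 3) F) : Matrix (Fin 3) (Fin 3) F)
      = !![a * ε, c ^ q * ε, 0; c * ε, a ^ q * ε, 0; 0, 0, 1] := by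
    rw [Units.val_mul, hM, hzM]
    ext i j; fin_cases i <;> fin_cases j <;> simp
  rw [card_fixed hsz, ← card_fixed_inf hq hF hm ho hac hM]
  congr 1
  · congr 1
    ext u
    simp only [Set.mem_ofPred_eq, and_congr_right_iff]
    intro _
    constructor
    · intro h
      apply mul_right_cancel₀ hε0
      linear_combination h
    · intro h
      linear_combination ε * h
  · split_ifs with h1
    · obtain ⟨rfl, rfl⟩ := h1
      have hA := card_affine hq hF
      rw [← hA, Nat.add_sub_cancel]
      have e1 : (1 : Matrix (Fin 3) (Fin 3) F) =
          !![a * ε, c ^ q * ε, 0; c * ε, a ^ q * ε, 0; 0, 0, 1] := by rw [← hsz]; simp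
      have e00 := congrFun (congrFun e1 0) 0
      have e01 := congrFun (congrFun e1 0) 1
      have e10 := congrFun (congrFun e1 1) 0
      have e11 := congrFun (congrFun e1 1) 1
      simp only [Matrix.of_apply, Matrix.cons_val, Matrix.one_apply_eq] at e00 e11
      simp only [Matrix.of_apply, Matrix.cons_val, ne_eq, zero_ne_one, one_ne_zero,
        not_false_eq_true, Matrix.one_apply_ne] at e01 e10
      rw [← e00, ← e01, ← e10, ← e11]
      congr 1; ext p; simp
    · rw [Set.ncard_eq_zero]
      rw [Set.eq_empty_iff_forall_notMem]
      rintro ⟨x, y⟩ ⟨hxy, hx, hy⟩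
      simp only at hxy hx hy
      apply h1
      -- `(x, y)` is an eigenvector of `s` for `ε⁻¹`, hence `ε ^ n = 1` whenever `s ^ n = 1`
      have hv : (s : Matrix (Fin 3) (Fin 3) F) *ᵥ ![x, y, 0] = ε⁻¹ • ![x, y, 0] := by
        rw [hM]
        ext i; fin_cases i <;> simp [Matrix.mulVec, dotProduct, Fin.sum_univ_three]
        · field_simp; linear_combination hx
        · field_simp; linear_combination hy
      have hvn : ∀ n : ℕ, ((s : Matrix (Fin 3) (Fin 3) F) ^ n) *ᵥ ![x, y, 0]
          = (ε⁻¹) ^ n • ![x, y, 0] := by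
        intro n
        induction n with
        | zero => simp
        | succ n ih =>
          rw [pow_succ, ← Matrix.mulVec_mulVec, hv, Matrix.mulVec_smul, ih, smul_smul, pow_succ']
      have hpow : ∀ n : ℕ, s ^ n = 1 → ε ^ n = 1 := by
        intro n hn
        have h3 : (s : Matrix (Fin 3) (Fin 3) F) ^ n = 1 := by simpa using congrArg Units.val hn
        have h4 := hvn n
        rw [h3, Matrix.one_mulVec] at h4
        have h5 := congrFun h4 0
        have h6 := congrFun h4 1
        simp at h5 h6
        by_contra hne
        have h7 : (ε ^ n)⁻¹ ≠ 1 := fun h => hne (inv_eq_one.1 h)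
        have hx0 : x = 0 := by
          by_contra hx0
          exact h7 (mul_right_cancel₀ hx0 (by rw [one_mul]; exact h5.symm))
        have hy0 : y = 0 := by
          by_contra hy0
          exact h7 (mul_right_cancel₀ hy0 (by rw [one_mul]; exact h6.symm))
        rw [hx0, hy0] at hxy
        simp at hxy
      have hε1 : ε = 1 := by
        rcases ho with h2 | h3
        · exact eq_one_of_sq (hpow 2 h2)
        · exact eq_one_of_cube hm (hpow 3 h3) hε
      subst hε1
      simp only [mul_one] at hx hy
      obtain ⟨rfl, rfl⟩ := fix_affine hq hF hac hxy hx hy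
      refine ⟨eq_one_of_params hq0 hM, ?_⟩
      apply Units.ext
      rw [hzM]
      ext i j; fin_cases i <;> fin_cases j <;> simp

end FixedPoints

/-! ### Orbit counting -/

section Orbits

variable {q : ℕ} {F : Type*} [Field F]

/-- The orbit-counting lemma for `numOrbits`. -/
lemma burnside [Fintype F] (L : Subgroup (GL (Fin 3) F)) [Fintype L]
    (O : Set (Projectivization F (Fin 3 → F))) (hO : ∀ g ∈ L, ∀ P ∈ O, glAct g P ∈ O) :
    ∑ g : L, {P | P ∈ O ∧ glAct (g : GL (Fin 3) F) P = P}.ncard =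
      numOrbits L O * Nat.card L := by
  classical
  let : MulAction L O :=
    { smul := fun g P => ⟨glAct g.1 P.1, hO g.1 g.2 P.1 P.2⟩
      one_smul := fun P => Subtype.ext (glAct_one P.1)
      mul_smul := fun g k P => Subtype.ext (glAct_mul g.1 k.1 P.1) }
  have hsmul : ∀ (g : L) (P : O), ((g • P : O) : Projectivization F (Fin 3 → F)) = glAct g.1 P.1 :=
    fun _ _ => rfl
  have : Finite O := Subtype.finite
  let : Fintype (Quotient (MulAction.orbitRel L O)) := Fintype.ofFinite _
  let : ∀ g : L, Fintype (MulAction.fixedBy O g) := fun g => Fintype.ofFinite _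
  have hN : numOrbits L O = Fintype.card (Quotient (MulAction.orbitRel L O)) := by
    rw [← Nat.card_eq_fintype_card, numOrbits, Set.image_eq_range]
    refine (Nat.card_congr ((Quotient.congrRight ?_).trans (Setoid.quotientKerEquivRange _))).symm
    intro P Q
    rw [Setoid.ker_def, MulAction.orbitRel_apply]
    constructor
    · rintro ⟨g, rfl⟩
      ext R
      simp only [Set.mem_ofPred_eq]
      constructor
      · rintro ⟨k, hk, rfl⟩
        exact ⟨k * g.1, L.mul_mem hk g.2, glAct_mul _ _ _⟩
      · rintro ⟨k, hk, rfl⟩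
        refine ⟨k * g.1⁻¹, L.mul_mem hk (L.inv_mem g.2), ?_⟩
        rw [hsmul, ← glAct_mul, inv_mul_cancel_right]
    · intro hPQ
      have : (P : Projectivization F (Fin 3 → F)) ∈
          {y | ∃ g ∈ L, glAct g (Q : Projectivization F (Fin 3 → F)) = y} := by
        rw [← hPQ]; exact ⟨1, L.one_mem, glAct_one _⟩
      obtain ⟨g, hg, e⟩ := this
      exact ⟨⟨g, hg⟩, Subtype.ext e⟩
  rw [hN, Nat.card_eq_fintype_card, ← MulAction.sum_card_fixedBy_eq_card_orbits_mul_card_group]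
  refine Finset.sum_congr rfl fun g _ => ?_
  rw [← Nat.card_eq_fintype_card, Nat.card_coe_set_eq,
    ← Set.ncard_image_of_injective _ Subtype.val_injective]
  congr 1
  ext P
  simp only [Set.mem_ofPred_eq, Set.mem_image, MulAction.mem_fixedBy]
  constructor
  · rintro ⟨hP, e⟩
    exact ⟨⟨P, hP⟩, Subtype.ext e, rfl⟩
  · rintro ⟨P', e, rfl⟩
    exact ⟨P'.2, congrArg Subtype.val e⟩

/-- `L ∩ Z` is a subgroup. -/
lemma exists_center_subgroup (L : Subgroup (GL (Fin 3) F)) :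
    ∃ Z : Subgroup (GL (Fin 3) F), ∀ z, z ∈ Z ↔ z ∈ (L : Set (GL (Fin 3) F)) ∩ ZSet q F := by
  have hmul : ∀ {a b : GL (Fin 3) F}, a ∈ ZSet q F → b ∈ ZSet q F → a * b ∈ ZSet q F := by
    rintro a b ⟨ε, h1, e1⟩ ⟨η, h2, e2⟩
    refine ⟨ε * η, by rw [mul_pow, h1, h2, one_mul], ?_⟩
    rw [Units.val_mul, e1, e2, Matrix.diagonal_mul_diagonal]
    congr 1
    ext i; fin_cases i <;> simp
  refine ⟨⟨⟨⟨(L : Set (GL (Fin 3) F)) ∩ ZSet q F, fun ha hb => ⟨L.mul_mem ha.1 hb.1, hmul ha.2 hb.2⟩⟩,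
    ⟨L.one_mem, 1, one_pow _, ?_⟩⟩, ?_⟩, fun z => Iff.rfl⟩
  · ext i j; fin_cases i <;> fin_cases j <;> simp
  · rintro x ⟨hx, ε, h1, e1⟩
    refine ⟨L.inv_mem hx, ε⁻¹, by rw [inv_pow, h1, inv_one], ?_⟩
    have hε0 : ε ≠ 0 := by rintro rfl; simp at h1
    have : (x : Matrix (Fin 3) (Fin 3) F) * Matrix.diagonal ![ε⁻¹, ε⁻¹, 1] = 1 := by
      rw [e1, Matrix.diagonal_mul_diagonal, ← Matrix.diagonal_one]
      congr 1
      ext i; fin_cases i <;> simp [hε0]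
    exact Units.inv_eq_of_mul_eq_one_right this

lemma ZSet_comm {z g : GL (Fin 3) F} (hz : z ∈ ZSet q F) (hg : g ∈ MlSet q F) :
    g * z = z * g := by
  obtain ⟨ε, -, e1⟩ := hz
  obtain ⟨a, c, τ, -, -, e2⟩ := hg
  apply Units.ext
  rw [Units.val_mul, Units.val_mul, e1, e2]
  ext i j; fin_cases i <;> fin_cases j <;> simp [mul_comm]

end Orbits

theorem stmt10 (h q w : ℕ) (hh : 1 ≤ h) (hq : q = 2 ^ h) (heven : Even h)
    (F : Type*) [Field F] [Fintype F] (hF : Fintype.card F = q ^ 2)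
    (hw : w ∣ q + 1)
    (L : Subgroup (GL (Fin 3) F)) (hLMl : (L : Set (GL (Fin 3) F)) ⊆ MlSet q F)
    (hZcard : Nat.card ((L : Set (GL (Fin 3) F)) ∩ ZSet q F : Set (GL (Fin 3) F)) = w)
    (S : Subgroup (GL (Fin 3) F))
    (hSiso : Nonempty (↥S ≃* alternatingGroup (Fin 4)))
    (hgen : L = Subgroup.closure
      ((S : Set (GL (Fin 3) F)) ∪ ((L : Set (GL (Fin 3) F)) ∩ ZSet q F)))
    (htriv : (S : Set (GL (Fin 3) F)) ∩ ((L : Set (GL (Fin 3) F)) ∩ ZSet q F) ⊆ {1}) :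
    (numOrbits L (hermitianPts q F) : ℚ)
      = ((q : ℚ) + 20) / 12
        + ((q : ℚ) / 4) * (((q : ℚ) - 1) / 3) * (((q : ℚ) + 1) / (w : ℚ)) := by
  classical
  have hq0 : q ≠ 0 := by subst hq; positivity
  have : Fact (Nat.Prime 2) := ⟨Nat.prime_two⟩
  have : CharP F 2 := by
    apply charP_of_card_eq_prime_pow (f := h * 2)
    rw [hF, hq, pow_mul]
  have hm := q_mod hq heven
  obtain ⟨φ⟩ := hSiso
  have hSL : S ≤ L := by
    rw [hgen]; exact fun x hx => Subgroup.subset_closure (Or.inl hx)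
  have hord : ∀ s ∈ S, s ^ 2 = 1 ∨ s ^ 3 = 1 := by
    intro s hs
    have key : ∀ n : ℕ, φ ⟨s, hs⟩ ^ n = 1 → s ^ n = 1 := by
      intro n hn
      rw [← map_pow, map_eq_one_iff φ φ.injective] at hn
      simpa using congrArg Subtype.val hn
    exact (A4_cases (φ ⟨s, hs⟩)).imp (key 2) (key 3)
  obtain ⟨Z, hZ⟩ := exists_center_subgroup (q := q) L
  have hZL : ∀ z ∈ Z, z ∈ L := fun z hz => ((hZ z).1 hz).1
  have hZZ : ∀ z ∈ Z, z ∈ ZSet q F := fun z hz => ((hZ z).1 hz).2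
  have hdisj : ∀ x, x ∈ S → x ∈ Z → x = 1 := fun x hx hz => htriv ⟨hx, (hZ x).1 hz⟩
  have hZw : Nat.card Z = w := by
    rw [← hZcard]
    exact Nat.card_congr (Equiv.subtypeEquivRight (fun z => hZ z))
  have hcomm : ∀ s ∈ S, ∀ z ∈ Z, s * z = z * s :=
    fun s hs z hz => ZSet_comm (hZZ z hz) (hLMl (hSL hs))
  -- the product map `S × Z → L` is a bijection
  have hbij : Function.Bijective (fun p : S × Z =>
      (⟨p.1.1 * p.2.1, L.mul_mem (hSL p.1.2) (hZL _ p.2.2)⟩ : L)) := by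
    constructor
    · rintro ⟨⟨s, hs⟩, ⟨z, hz⟩⟩ ⟨⟨s', hs'⟩, ⟨z', hz'⟩⟩ heq
      have heq : s * z = s' * z' := congrArg Subtype.val heq
      have h1 : s'⁻¹ * s = z' * z⁻¹ := by
        rw [inv_mul_eq_iff_eq_mul, ← mul_assoc, ← heq, mul_inv_cancel_right]
      have h2 := hdisj (s'⁻¹ * s) (S.mul_mem (S.inv_mem hs') hs)
        (h1 ▸ Z.mul_mem hz' (Z.inv_mem hz))
      have h3 : s = s' := (inv_mul_eq_one.1 h2).symm
      subst h3
      have h4 : z = z' := mul_left_cancel heq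
      subst h4
      rfl
    · rintro ⟨g, hg⟩
      have : ∃ s ∈ S, ∃ z ∈ Z, s * z = g := by
        rw [hgen] at hg
        induction hg using Subgroup.closure_induction with
        | mem x hx =>
          rcases hx with hx | hx
          · exact ⟨x, hx, 1, Z.one_mem, mul_one x⟩
          · exact ⟨1, S.one_mem, x, (hZ x).2 hx, one_mul x⟩
        | one => exact ⟨1, S.one_mem, 1, Z.one_mem, mul_one 1⟩
        | mul x y _ _ hx hy =>
          obtain ⟨s, hs, z, hz, rfl⟩ := hx
          obtain ⟨s', hs', z', hz', rfl⟩ := hy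
          refine ⟨s * s', S.mul_mem hs hs', z * z', Z.mul_mem hz hz', ?_⟩
          rw [mul_assoc, ← mul_assoc s', hcomm s' hs' z hz]
          simp only [mul_assoc]
        | inv x _ hx =>
          obtain ⟨s, hs, z, hz, rfl⟩ := hx
          exact ⟨s⁻¹, S.inv_mem hs, z⁻¹, Z.inv_mem hz, by
            rw [hcomm s hs z hz, _root_.mul_inv_rev]⟩
      obtain ⟨s, hs, z, hz, e⟩ := this
      exact ⟨(⟨s, hs⟩, ⟨z, hz⟩), Subtype.ext e⟩
  have hB := burnside L (hermitianPts q F) (fun g hg P hP => glAct_mem hq hF (hLMl hg) hP)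
  rw [← Nat.card_congr (Equiv.ofBijective _ hbij), Nat.card_prod, hZw, Nat.card_congr φ.toEquiv,
    ← (Equiv.ofBijective _ hbij).sum_comp] at hB
  obtain ⟨f, hf⟩ : ∃ f : S → ℕ,
      ∀ s, f s = if s = 1 then q + 1 else if s ^ 2 = 1 then 1 else 2 := ⟨_, fun _ => rfl⟩
  have hfix : ∀ p : S × Z, {P | P ∈ hermitianPts q F ∧
      glAct ((Equiv.ofBijective _ hbij p : L) : GL (Fin 3) F) P = P}.ncard =
      f p.1 + (if p = 1 then q ^ 3 - q else 0) := by
    rintro ⟨⟨s, hs⟩, ⟨z, hz⟩⟩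
    refine (card_fixed_mul hq hF hm (hLMl (hSL hs)) (hord s hs) (hZZ z hz)).trans ?_
    simp [hf, Subtype.ext_iff, Prod.ext_iff]
  rw [Finset.sum_congr rfl (fun p _ => hfix p), Finset.sum_add_distrib, Fintype.sum_prod_type] at hB
  have hA4 : ∑ s : S, f s = q + 20 := by
    rw [show q + 20 = (q + 1) + 19 by ring, ← A4_sum (q + 1), ← φ.toEquiv.sum_comp]
    refine Finset.sum_congr rfl fun s _ => ?_
    simp [hf, ← map_pow]
  have hc4 : Nat.card (alternatingGroup (Fin 4)) = 12 := by
    rw [Nat.card_eq_fintype_card]; decide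
  simp only [Finset.sum_const, Finset.card_univ, smul_eq_mul, ← Finset.mul_sum, hA4,
    Finset.sum_ite_eq', Finset.mem_univ, if_true, hc4] at hB
  rw [← Nat.card_eq_fintype_card, hZw] at hB
  have hw0 : (w : ℚ) ≠ 0 := by
    have : w ≠ 0 := by rintro rfl; simp at hw
    exact_mod_cast this
  have hq3 : q ≤ q ^ 3 := Nat.le_self_pow (by norm_num) q
  have hB' := congrArg (Nat.cast (R := ℚ)) hB
  push_cast [Nat.cast_sub hq3] at hB'
  field_simp
  linear_combination -12 * hB'
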